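/- Let (φ,φ̄) ∈ G(T,R) and let W' ⊆ V be E-commensurable of index k with W. Then φ·W' := φ((W'^⊥)^⊥) ∩ V is E-commensurable of index k + d(φ) with W. -/

import Mathlib

open Module Submodule

noncomputable section

abbrev TT : Type := (ℕ → ℂ) × (ℕ →₀ ℂ)
abbrev RR : Type := (ℕ →₀ ℂ) × (ℕ → ℂ)

lemma lc_v_add (v w : ℕ → ℂ) (l : ℕ →₀ ℂ) :
    Finsupp.linearCombination ℂ (v + w) l
      = Finsupp.linearCombination ℂ v l + Finsupp.linearCombination ℂ w l := by
  classical
  simp only [Finsupp.linearCombination_apply]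
  rw [← Finsupp.sum_add]
  exact Finsupp.sum_congr fun i _ => by simp [Pi.add_apply, smul_add, mul_add]

lemma lc_v_smul (c : ℂ) (v : ℕ → ℂ) (l : ℕ →₀ ℂ) :
    Finsupp.linearCombination ℂ (c • v) l = c • Finsupp.linearCombination ℂ v l := by
  classical
  simp only [Finsupp.linearCombination_apply, Finsupp.smul_sum]
  exact Finsupp.sum_congr fun i _ => by simp [Pi.smul_apply, smul_comm, smul_eq_mul, mul_left_comm]

/-- The nondegenerate pairing `p : T × R → ℂ`,
`p((ω,u),(w,ν)) = Σ_i ω(i)w(i) + Σ_i u(i)ν(i)`. -/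
def pairB : TT →ₗ[ℂ] RR →ₗ[ℂ] ℂ :=
  LinearMap.mk₂ ℂ
    (fun x y => Finsupp.linearCombination ℂ x.1 y.1 + Finsupp.linearCombination ℂ y.2 x.2)
    (fun x x' y => by
      simp only [Prod.fst_add, Prod.snd_add, lc_v_add, map_add]; ring)
    (fun c x y => by
      simp only [Prod.smul_fst, Prod.smul_snd, lc_v_smul, map_smul, smul_add])
    (fun x y y' => by
      simp only [Prod.fst_add, Prod.snd_add, lc_v_add, map_add]; ring)
    (fun c x y => by
      simp only [Prod.smul_fst, Prod.smul_snd, lc_v_smul, map_smul, smul_add])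

/-- The Mackey-group condition on a pair of automorphisms:
`p(φ x, y) = p(x, φ̄ y)` for all `x ∈ T`, `y ∈ R`. -/
def IsMackey (φ : TT ≃ₗ[ℂ] TT) (ψ : RR ≃ₗ[ℂ] RR) : Prop :=
  ∀ (x : TT) (y : RR), pairB (φ x) y = pairB x (ψ y)

/-- `W^♯ = (ℕ→ℂ) × {0} ⊆ T`. -/
def Wsharp : Submodule ℂ TT := LinearMap.range (LinearMap.inl ℂ (ℕ → ℂ) (ℕ →₀ ℂ))

/-- `U^♯ = {0} × (ℕ→ℂ) ⊆ R`. -/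
def Usharp : Submodule ℂ RR := LinearMap.range (LinearMap.inr ℂ (ℕ →₀ ℂ) (ℕ → ℂ))

/-- `V = (ℕ→₀ℂ) × (ℕ→₀ℂ) ⊆ T`. -/
def Vsub : Submodule ℂ TT :=
  LinearMap.range
    ((Finsupp.lcoeFun : (ℕ →₀ ℂ) →ₗ[ℂ] (ℕ → ℂ)).prodMap
      (LinearMap.id : (ℕ →₀ ℂ) →ₗ[ℂ] (ℕ →₀ ℂ)))

/-- `W = (ℕ→₀ℂ) × {0} ⊆ T`. -/
def Wsub : Submodule ℂ TT :=
  LinearMap.range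
    ((LinearMap.inl ℂ (ℕ → ℂ) (ℕ →₀ ℂ)).comp
      (Finsupp.lcoeFun : (ℕ →₀ ℂ) →ₗ[ℂ] (ℕ → ℂ)))

/-- `π_U : T → (ℕ→₀ℂ)`, the second projection. -/
def piU : TT →ₗ[ℂ] (ℕ →₀ ℂ) := LinearMap.snd ℂ (ℕ → ℂ) (ℕ →₀ ℂ)

/-- `π_{W*} : R → (ℕ→₀ℂ)`, the first projection. -/
def piW : RR →ₗ[ℂ] (ℕ →₀ ℂ) := LinearMap.fst ℂ (ℕ →₀ ℂ) (ℕ → ℂ)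

/-- The degree `d(φ) = dim π_U(φ(W^♯)) − dim π_U(φ^{-1}(W^♯))`. -/
def deg (φ : TT ≃ₗ[ℂ] TT) : ℤ :=
  (Module.finrank ℂ ((Wsharp.map φ.toLinearMap).map piU) : ℤ) -
    (Module.finrank ℂ ((Wsharp.map φ.symm.toLinearMap).map piU) : ℤ)

/-- `span {(δ_i, 0) : i ≥ n} ⊆ T`. -/
def tailSpan (n : ℕ) : Submodule ℂ TT :=
  Submodule.span ℂ
    ((fun i => ((((Finsupp.single i (1 : ℂ)) : ℕ →₀ ℂ) : ℕ → ℂ), (0 : ℕ →₀ ℂ))) '' {i | n ≤ i})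

/-- `W'` is E-commensurable of index `k` with `W`:
`W' = G ⊕ span{(δ_i,0) : i ≥ n}` with `G ⊆ V` finite-dimensional of dimension `n + k`. -/
def Ecomm (W' : Submodule ℂ TT) (k : ℤ) : Prop :=
  ∃ (n : ℕ) (G : Submodule ℂ TT), G ≤ Vsub ∧ FiniteDimensional ℂ G ∧
    (Module.finrank ℂ G : ℤ) = (n : ℤ) + k ∧ Disjoint G (tailSpan n) ∧
    W' = G ⊔ tailSpan n

/-- `W'^⊥ = {y ∈ R : p(x,y) = 0 for all x ∈ W'}`. -/
def perpR (W' : Submodule ℂ TT) : Submodule ℂ RR :=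
  ⨅ x ∈ (W' : Set TT), LinearMap.ker (pairB x)

/-- `Y^⊥ = {x ∈ T : p(x,y) = 0 for all y ∈ Y}`. -/
def perpT (Y : Submodule ℂ RR) : Submodule ℂ TT :=
  ⨅ y ∈ (Y : Set RR), LinearMap.ker (pairB.flip y)

/-- The action `φ·W' = φ((W'^⊥)^⊥) ∩ V`. -/
def actOn (φ : TT ≃ₗ[ℂ] TT) (W' : Submodule ℂ TT) : Submodule ℂ TT :=
  ((perpT (perpR W')).map φ.toLinearMap) ⊓ Vsub

end

/-!
For commensurable subspaces `A`, `B` the relative dimension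
`relDim A B = dim A / (A ∩ B) - dim B / (A ∩ B)` is additive,
`relDim A B + relDim B C = relDim A C`, and invariant under automorphisms. Since `W^♯` is the kernel
of `π_U`, the degree of `φ` is `relDim (φ W^♯) W^♯`. Likewise `W'` is E-commensurable of index `k`
with `W` if and only if `W' = L ∩ V` for some open `L` commensurable with `W^♯` and of relative
dimension `k` over it, and then `L = (W'^⊥)^⊥`. An element of the Mackey group is continuous: the
functionals `ω ↦ (φ (ω, 0)).2 j` span a finite-dimensional space, because `(φ (ω, 0)).2` always has
finite support. So `φ` maps open subspaces commensurable with `W^♯` to such subspaces, and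
`relDim (φ L) W^♯ = relDim (φ L) (φ W^♯) + relDim (φ W^♯) W^♯ = k + d(φ)`.
-/

section CommensurableSubmodules

variable {K M N P : Type*} [DivisionRing K] [AddCommGroup M] [Module K M] [AddCommGroup N]
  [Module K N] [AddCommGroup P] [Module K P]

/-- `A` is contained in `B` up to finite dimension: `A / (A ∩ B)`, encoded as the image of `A` in
`M ⧸ B`, is finite-dimensional. -/
def AlmostLE (A B : Submodule K M) : Prop :=
  FiniteDimensional K (A.map B.mkQ)

/-- The codimension `dim A / (A ∩ B)`, with junk value `0` if `AlmostLE A B` fails. -/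
noncomputable def relCodim (A B : Submodule K M) : ℕ :=
  finrank K (A.map B.mkQ)

/-- Two subspaces are commensurable if their intersection has finite codimension in each. -/
structure Commensurable (A B : Submodule K M) : Prop where
  almostLE : AlmostLE A B
  almostGE : AlmostLE B A

/-- The relative dimension `dim A / (A ∩ B) - dim B / (A ∩ B)` of commensurable subspaces. -/
noncomputable def relDim (A B : Submodule K M) : ℤ :=
  relCodim A B - relCodim B A

/-- The image of `A` under a linear map is determined by the part of the kernel lying in `A`. -/
noncomputable def mapEquivMapOfInfKerEq {A : Submodule K M} (f : M →ₗ[K] N) (g : M →ₗ[K] P)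
    (h : A ⊓ LinearMap.ker f = A ⊓ LinearMap.ker g) : A.map f ≃ₗ[K] A.map g :=
  LinearEquiv.ofEq _ _ (LinearMap.range_domRestrict A f).symm ≪≫ₗ
    (f.domRestrict A).quotKerEquivRange.symm ≪≫ₗ
    quotEquivOfEq _ _ (by
      rw [LinearMap.ker_domRestrict, LinearMap.ker_domRestrict]
      simpa using congrArg (comap A.subtype) h) ≪≫ₗ
    (g.domRestrict A).quotKerEquivRange ≪≫ₗ
    LinearEquiv.ofEq _ _ (LinearMap.range_domRestrict A g)

variable {A A' B B' C D : Submodule K M}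

lemma finiteDimensional_map_iff_almostLE {f : M →ₗ[K] N} (h : A ⊓ LinearMap.ker f = A ⊓ B) :
    FiniteDimensional K (A.map f) ↔ AlmostLE A B :=
  Module.Finite.equiv_iff (mapEquivMapOfInfKerEq f B.mkQ (by rw [h, ker_mkQ]))

lemma finrank_map_eq_relCodim {f : M →ₗ[K] N} (h : A ⊓ LinearMap.ker f = A ⊓ B) :
    finrank K (A.map f) = relCodim A B :=
  (mapEquivMapOfInfKerEq f B.mkQ (by rw [h, ker_mkQ])).finrank_eq

lemma map_mkQ_eq_map_factor (h : B ≤ C) : A.map C.mkQ = (A.map B.mkQ).map (factor h) := by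
  rw [← map_comp, factor_comp_mk]

lemma ker_factor (h : B ≤ C) : LinearMap.ker (factor h) = C.map B.mkQ := by
  rw [factor, ker_mapQ, comap_id]

lemma almostLE_of_le (h : A ≤ B) : AlmostLE A B := by
  rw [AlmostLE, (mkQ_map_self B ▸ map_mono h : A.map B.mkQ ≤ ⊥).antisymm bot_le]
  infer_instance

lemma AlmostLE.mono_left (h : AlmostLE A B) (hA : A' ≤ A) : AlmostLE A' B :=
  have : FiniteDimensional K (A.map B.mkQ) := h
  Submodule.finiteDimensional_of_le (map_mono hA)

lemma AlmostLE.trans (hAB : AlmostLE A B) (hBC : AlmostLE B C) : AlmostLE A C := by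
  have hA : FiniteDimensional K (A.map B.mkQ) := hAB
  have hB : FiniteDimensional K (B.map C.mkQ) := hBC
  refine (fg_iff_finiteDimensional _).1
    (fg_of_fg_map_of_fg_inf_ker (factor (le_sup_right : C ≤ B ⊔ C)) ?_ ?_)
  · rw [← map_mkQ_eq_map_factor, map_mkQ_eq_map_factor (le_sup_left : B ≤ B ⊔ C)]
    exact (fg_iff_finiteDimensional _).2 inferInstance
  · rw [ker_factor, Submodule.map_sup, mkQ_map_self, sup_bot_eq]
    exact (fg_iff_finiteDimensional _).2 (Submodule.finiteDimensional_of_le inf_le_right)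

lemma AlmostLE.inf (hB : AlmostLE A B) (hC : AlmostLE A C) : AlmostLE A (B ⊓ C) := by
  have : FiniteDimensional K ((A.map B.mkQ).prod (A.map C.mkQ)) :=
    (fg_iff_finiteDimensional _).1
      (((fg_iff_finiteDimensional _).2 hB).prod ((fg_iff_finiteDimensional _).2 hC))
  rw [← finiteDimensional_map_iff_almostLE (f := B.mkQ.prod C.mkQ)
    (by rw [LinearMap.ker_prod, ker_mkQ, ker_mkQ])]
  refine Submodule.finiteDimensional_of_le (S₂ := (A.map B.mkQ).prod (A.map C.mkQ)) ?_
  rintro _ ⟨x, hx, rfl⟩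
  exact ⟨mem_map_of_mem hx, mem_map_of_mem hx⟩

lemma inf_ker_comp_equiv (e : M ≃ₗ[K] N) :
    A ⊓ LinearMap.ker ((B.map e.toLinearMap).mkQ ∘ₗ e.toLinearMap) = A ⊓ B := by
  rw [LinearMap.ker_comp, ker_mkQ, comap_map_eq_of_injective e.injective]

lemma AlmostLE.map (h : AlmostLE A B) (e : M ≃ₗ[K] N) :
    AlmostLE (A.map e.toLinearMap) (B.map e.toLinearMap) := by
  rwa [AlmostLE, ← map_comp, finiteDimensional_map_iff_almostLE (inf_ker_comp_equiv e)]

lemma relCodim_map (A B : Submodule K M) (e : M ≃ₗ[K] N) :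
    relCodim (A.map e.toLinearMap) (B.map e.toLinearMap) = relCodim A B := by
  rw [relCodim, ← map_comp, finrank_map_eq_relCodim (inf_ker_comp_equiv e)]

lemma relCodim_eq_zero_of_le (h : A ≤ B) : relCodim A B = 0 := by
  rw [relCodim, (mkQ_map_self B ▸ map_mono h : A.map B.mkQ ≤ ⊥).antisymm bot_le, finrank_bot]

lemma relCodim_sup_right_of_disjoint (h : Disjoint A B) : relCodim (A ⊔ B) B = finrank K A := by
  rw [relCodim, Submodule.map_sup, mkQ_map_self, sup_bot_eq, ← relCodim,
    ← finrank_map_eq_relCodim (f := LinearMap.id)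
      (by rw [LinearMap.ker_id, inf_bot_eq, h.eq_bot]), map_id]

lemma almostLE_iff_finiteDimensional_of_disjoint (h : Disjoint A B) :
    AlmostLE A B ↔ FiniteDimensional K A := by
  rw [← finiteDimensional_map_iff_almostLE (f := LinearMap.id)
    (by rw [LinearMap.ker_id, inf_bot_eq, h.eq_bot]), map_id]

lemma almostLE_sup_right [FiniteDimensional K A] : AlmostLE (A ⊔ B) B := by
  rw [AlmostLE, Submodule.map_sup, mkQ_map_self, sup_bot_eq]
  infer_instance

lemma relCodim_eq_relCodim_add_relCodim_inf (hD : D ≤ B) (hA : AlmostLE A D) :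
    relCodim A D = relCodim A B + relCodim (A ⊓ B) D := by
  have : FiniteDimensional K (A.map D.mkQ) := hA
  have hker : (A ⊓ B).map D.mkQ = A.map D.mkQ ⊓ LinearMap.ker (factor hD) := by
    rw [ker_factor, map_inf_eq_map_inf_comap, comap_map_mkQ, sup_eq_right.2 hD]
  rw [relCodim, relCodim, relCodim, hker, map_mkQ_eq_map_factor hD,
    ← ((factor hD).domRestrict (A.map D.mkQ)).finrank_range_add_finrank_ker,
    LinearMap.range_domRestrict, LinearMap.ker_domRestrict, ← finrank_map_subtype_eq,
    map_comap_subtype]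

lemma relDim_eq_relCodim_sub_relCodim (hDA : D ≤ A) (hDB : D ≤ B) (hA : AlmostLE A D)
    (hB : AlmostLE B D) : relDim A B = relCodim A D - relCodim B D := by
  rw [relDim, relCodim_eq_relCodim_add_relCodim_inf hDB hA,
    relCodim_eq_relCodim_add_relCodim_inf hDA hB, inf_comm B A]
  push_cast
  ring

lemma relDim_of_le (h : B ≤ A) : relDim A B = relCodim A B := by
  rw [relDim, relCodim_eq_zero_of_le h, Nat.cast_zero, sub_zero]

lemma relDim_swap (A B : Submodule K M) : relDim B A = -relDim A B :=
  (neg_sub _ _).symm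

lemma relDim_map (A B : Submodule K M) (e : M ≃ₗ[K] N) :
    relDim (A.map e.toLinearMap) (B.map e.toLinearMap) = relDim A B := by
  rw [relDim, relDim, relCodim_map, relCodim_map]

namespace Commensurable

lemma trans (hAB : Commensurable A B) (hBC : Commensurable B C) : Commensurable A C :=
  ⟨hAB.almostLE.trans hBC.almostLE, hBC.almostGE.trans hAB.almostGE⟩

lemma map (h : Commensurable A B) (e : M ≃ₗ[K] N) :
    Commensurable (A.map e.toLinearMap) (B.map e.toLinearMap) :=
  ⟨h.almostLE.map e, h.almostGE.map e⟩

lemma relDim_add_relDim (hAB : Commensurable A B) (hBC : Commensurable B C) :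
    relDim A B + relDim B C = relDim A C := by
  have hAC := hAB.trans hBC
  have hDA : A ⊓ B ⊓ C ≤ A := inf_le_left.trans inf_le_left
  have hDB : A ⊓ B ⊓ C ≤ B := inf_le_left.trans inf_le_right
  have hDC : A ⊓ B ⊓ C ≤ C := inf_le_right
  have hA : AlmostLE A (A ⊓ B ⊓ C) :=
    ((almostLE_of_le le_rfl).inf hAB.almostLE).inf hAC.almostLE
  have hB : AlmostLE B (A ⊓ B ⊓ C) :=
    (hAB.almostGE.inf (almostLE_of_le le_rfl)).inf hBC.almostLE
  have hC : AlmostLE C (A ⊓ B ⊓ C) :=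
    (hAC.almostGE.inf hBC.almostGE).inf (almostLE_of_le le_rfl)
  rw [relDim_eq_relCodim_sub_relCodim hDA hDB hA hB,
    relDim_eq_relCodim_sub_relCodim hDB hDC hB hC,
    relDim_eq_relCodim_sub_relCodim hDA hDC hA hC, sub_add_sub_cancel]

end Commensurable

end CommensurableSubmodules

section FiniteSpan

-- On a linearly independent subfamily with the same span some functional is constantly `1`.
lemma finiteDimensional_span_range_of_finite_ne_zero {K V ι : Type*} [DivisionRing K]
    [AddCommGroup V] [Module K V] (b : ι → V)
    (hb : ∀ f : V →ₗ[K] K, {i | f (b i) ≠ 0}.Finite) :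
    FiniteDimensional K (span K (Set.range b)) := by
  obtain ⟨κ, a, ha, hspan, hli⟩ := exists_linearIndependent' K b
  obtain ⟨f, hf⟩ := LinearMap.exists_extend
    ((Finsupp.linearCombination K fun _ : κ => (1 : K)) ∘ₗ hli.repr)
  have hf_one (k : κ) : f (b (a k)) = 1 := by
    have := LinearMap.congr_fun hf ⟨b (a k), subset_span ⟨k, rfl⟩⟩
    simpa [hli.repr_eq_single k ⟨b (a k), subset_span ⟨k, rfl⟩⟩ rfl] using this
  have : Finite κ := by
    have := (hb f).to_subtype
    exact Finite.of_injective (fun k => (⟨a k, by simp [hf_one]⟩ : {i | f (b i) ≠ 0}))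
      fun k l hkl => ha (congrArg Subtype.val hkl)
  rw [← hspan]
  exact FiniteDimensional.span_of_finite K (Set.finite_range _)

lemma exists_finset_le_supported_of_fg {R E α : Type*} [Semiring R] [AddCommMonoid E] [Module R E]
    {S : Submodule R (α →₀ E)} (hS : S.FG) : ∃ s : Finset α, S ≤ Finsupp.supported E R s := by
  classical
  obtain ⟨t, rfl⟩ := hS
  refine ⟨t.biUnion Finsupp.support, span_le.2 fun v hv => ?_⟩
  exact_mod_cast Finset.subset_biUnion_of_mem Finsupp.support hv

end FiniteSpan

lemma mem_wsharp {x : TT} : x ∈ Wsharp ↔ x.2 = 0 := by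
  simp [Wsharp, Prod.ext_iff, eq_comm]

lemma ker_piU : LinearMap.ker piU = Wsharp := by
  ext x
  rw [mem_wsharp]
  rfl

lemma mem_vsub {x : TT} : x ∈ Vsub ↔ ∃ w : ℕ →₀ ℂ, (w : ℕ → ℂ) = x.1 := by
  simp only [Vsub, LinearMap.mem_range, Prod.exists, LinearMap.prodMap_apply,
    LinearMap.id_apply, Prod.ext_iff]
  exact ⟨fun ⟨w, _, hw, _⟩ => ⟨w, hw⟩, fun ⟨w, hw⟩ => ⟨w, x.2, hw, rfl⟩⟩

/-- `{(ω, 0) : ω i = 0 for i < n}`, the double orthogonal of `tailSpan n`. These subspaces are the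
basic neighbourhoods of `0` for the linear topology on `T` in which `W^♯` is open and carries the
product topology. -/
noncomputable def wsharpTail (n : ℕ) : Submodule ℂ TT :=
  (Submodule.pi (Set.Iio n) fun _ => ⊥).prod ⊥

lemma mem_wsharpTail {n : ℕ} {x : TT} : x ∈ wsharpTail n ↔ (∀ i < n, x.1 i = 0) ∧ x.2 = 0 := by
  simp [wsharpTail, Submodule.mem_pi]

lemma wsharpTail_le_wsharp (n : ℕ) : wsharpTail n ≤ Wsharp := fun _ hx =>
  mem_wsharp.2 (mem_wsharpTail.1 hx).2

lemma tailSpan_eq_map_supported (n : ℕ) :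
    tailSpan n = (Finsupp.supported ℂ ℂ (Set.Ici n)).map
      (LinearMap.inl ℂ (ℕ → ℂ) (ℕ →₀ ℂ) ∘ₗ Finsupp.lcoeFun) := by
  rw [Finsupp.supported_eq_span_single, map_span, Set.image_image]
  rfl

lemma wsharpTail_inf_vsub (n : ℕ) : wsharpTail n ⊓ Vsub = tailSpan n := by
  have hsupp (w : ℕ →₀ ℂ) : w ∈ Finsupp.supported ℂ ℂ (Set.Ici n) ↔ ∀ i < n, w i = 0 := by
    simp [Finsupp.mem_supported']
  rw [tailSpan_eq_map_supported]
  apply le_antisymm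
  · rintro ⟨_, u⟩ ⟨hx, hV⟩
    obtain ⟨w, rfl⟩ := mem_vsub.1 hV
    obtain ⟨hw, rfl : u = 0⟩ := mem_wsharpTail.1 hx
    exact mem_map_of_mem ((hsupp w).2 hw)
  · rintro _ ⟨w, hw, rfl⟩
    exact ⟨mem_wsharpTail.2 ⟨(hsupp w).1 hw, rfl⟩, mem_vsub.2 ⟨w, rfl⟩⟩

lemma wsharpTail_sup_vsub (n : ℕ) : wsharpTail n ⊔ Vsub = ⊤ := by
  refine eq_top_iff'.2 fun x => ?_
  let w : ℕ →₀ ℂ := ∑ i ∈ Finset.range n, Finsupp.single i (x.1 i)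
  have hw : ∀ i < n, w i = x.1 i := fun i hi => by
    simp [w, Finsupp.finsetSum_apply, Finsupp.single_apply, hi.not_ge]
  refine mem_sup.2 ⟨(x.1 - w, 0), mem_wsharpTail.2 ⟨fun i hi => ?_, rfl⟩, (w, x.2),
    mem_vsub.2 ⟨w, rfl⟩, by simp⟩
  simp [hw i hi]

lemma tailSpan_le_wsharpTail (n : ℕ) : tailSpan n ≤ wsharpTail n :=
  wsharpTail_inf_vsub n ▸ inf_le_left

/-- The coordinates `(ω 0, …, ω (n - 1))` of `(ω, u) ∈ T`, which cut out `wsharpTail n` inside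
`W^♯`. -/
noncomputable def firstCoords (n : ℕ) : TT →ₗ[ℂ] Fin n → ℂ :=
  LinearMap.funLeft ℂ ℂ Fin.val ∘ₗ LinearMap.fst ℂ (ℕ → ℂ) (ℕ →₀ ℂ)

lemma map_firstCoords_wsharp (n : ℕ) : Wsharp.map (firstCoords n) = ⊤ := by
  refine eq_top_iff'.2 fun c => ?_
  obtain ⟨ω, rfl⟩ := LinearMap.funLeft_surjective_of_injective ℂ ℂ _ Fin.val_injective c
  exact ⟨(ω, 0), mem_wsharp.2 rfl, rfl⟩

lemma wsharp_inf_ker_firstCoords (n : ℕ) :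
    Wsharp ⊓ LinearMap.ker (firstCoords n) = Wsharp ⊓ wsharpTail n := by
  ext x
  simp only [mem_inf, mem_wsharp, mem_wsharpTail, LinearMap.mem_ker, firstCoords, funext_iff,
    LinearMap.comp_apply, LinearMap.funLeft_apply, LinearMap.fst_apply, Pi.zero_apply,
    Fin.forall_iff]
  tauto

lemma relCodim_wsharp_wsharpTail (n : ℕ) : relCodim Wsharp (wsharpTail n) = n := by
  rw [← finrank_map_eq_relCodim (wsharp_inf_ker_firstCoords n), map_firstCoords_wsharp, finrank_top,
    finrank_fin_fun]

lemma almostLE_wsharp_wsharpTail (n : ℕ) : AlmostLE Wsharp (wsharpTail n) := by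
  rw [← finiteDimensional_map_iff_almostLE (wsharp_inf_ker_firstCoords n)]
  infer_instance

lemma commensurable_wsharpTail_wsharp (n : ℕ) : Commensurable (wsharpTail n) Wsharp :=
  ⟨almostLE_of_le (wsharpTail_le_wsharp n), almostLE_wsharp_wsharpTail n⟩

lemma relDim_wsharpTail_wsharp (n : ℕ) : relDim (wsharpTail n) Wsharp = -n := by
  rw [relDim_swap, relDim_of_le (wsharpTail_le_wsharp n), relCodim_wsharp_wsharpTail]

lemma mem_perpR {A : Submodule ℂ TT} {y : RR} :
    y ∈ perpR A ↔ A ≤ LinearMap.ker (pairB.flip y) := by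
  simp [perpR, SetLike.le_def]

lemma mem_perpT {Y : Submodule ℂ RR} {x : TT} : x ∈ perpT Y ↔ ∀ y ∈ Y, pairB x y = 0 := by
  simp [perpT]

lemma perpR_sup (A B : Submodule ℂ TT) : perpR (A ⊔ B) = perpR A ⊓ perpR B := by
  ext y
  simp only [mem_inf, mem_perpR, sup_le_iff]

lemma le_perpT_perpR (A : Submodule ℂ TT) : A ≤ perpT (perpR A) := fun _ hx =>
  mem_perpT.2 fun _ hy => mem_perpR.1 hy hx

lemma pairB_single_fst (x : TT) (i : ℕ) : pairB x (Finsupp.single i 1, 0) = x.1 i := by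
  simp [pairB, Finsupp.linearCombination_apply]

lemma pairB_single_snd (x : TT) (i : ℕ) : pairB x (0, Pi.single i 1) = x.2 i := by
  simp [pairB, Finsupp.linearCombination_apply, Finsupp.sum, Pi.single_apply, eq_comm]

lemma pairB_fst (ω : ℕ → ℂ) (y : RR) : pairB (ω, 0) y = Finsupp.linearCombination ℂ ω y.1 := by
  simp [pairB]

lemma mem_perpR_tailSpan {n : ℕ} {y : RR} : y ∈ perpR (tailSpan n) ↔ ∀ i, n ≤ i → y.1 i = 0 := by
  rw [mem_perpR, tailSpan, span_le, Set.image_subset_iff]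
  refine forall₂_congr fun i _ => ?_
  simp [pairB_fst, Finsupp.linearCombination_apply, Finsupp.sum, Finsupp.single_apply]

lemma perpR_tailSpan (n : ℕ) : perpR (tailSpan n) = perpR (wsharpTail n) := by
  refine le_antisymm (fun y hy => mem_perpR.2 ?_)
    fun y hy => mem_perpR.2 ((tailSpan_le_wsharpTail n).trans (mem_perpR.1 hy))
  rintro ⟨ω, u⟩ hx
  obtain ⟨hω, rfl : u = 0⟩ := mem_wsharpTail.1 hx
  change pairB (ω, 0) y = 0
  rw [pairB_fst, Finsupp.linearCombination_apply]
  refine Finset.sum_eq_zero fun i _ => ?_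
  change y.1 i • ω i = 0
  rcases lt_or_ge i n with hi | hi
  · rw [show ω i = 0 from hω i hi, smul_zero]
  · rw [mem_perpR_tailSpan.1 hy i hi, zero_smul]

lemma linearMap_ext_of_wsharpTail_le_ker {n : ℕ} {f g : TT →ₗ[ℂ] ℂ}
    (hf : wsharpTail n ≤ LinearMap.ker f) (hg : wsharpTail n ≤ LinearMap.ker g)
    (hfst : ∀ i, f (Pi.single i 1, 0) = g (Pi.single i 1, 0))
    (hsnd : ∀ i, f (0, Finsupp.single i 1) = g (0, Finsupp.single i 1)) : f = g := by
  refine LinearMap.ext_on_codisjoint (codisjoint_iff.2 (wsharpTail_sup_vsub n))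
    (fun x hx => (hf hx).trans (hg hx).symm) ?_
  rintro _ ⟨x, rfl⟩
  refine LinearMap.congr_fun (f := f ∘ₗ _) (g := g ∘ₗ _) ?_ x
  ext i
  · simpa [Finsupp.single_eq_pi_single] using hfst i
  · simpa using hsnd i

lemma exists_pairB_flip_eq {n : ℕ} {f : TT →ₗ[ℂ] ℂ} (hf : wsharpTail n ≤ LinearMap.ker f) :
    ∃ y, pairB.flip y = f := by
  have hsupp (i : ℕ) (hi : n ≤ i) : f (Pi.single i 1, 0) = 0 :=
    hf (mem_wsharpTail.2 ⟨fun j hj => Pi.single_eq_of_ne (hj.trans_le hi).ne _, rfl⟩)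
  let w : ℕ →₀ ℂ := Finsupp.onFinset (Finset.range n) (fun i => f (Pi.single i 1, 0))
    fun i hi => Finset.mem_range.2 (not_le.1 (mt (hsupp i) hi))
  let y : RR := (w, fun i => f (0, Finsupp.single i 1))
  have hy : y ∈ perpR (wsharpTail n) := perpR_tailSpan n ▸ mem_perpR_tailSpan.2 hsupp
  refine ⟨y, linearMap_ext_of_wsharpTail_le_ker (mem_perpR.1 hy) hf (fun i => ?_) fun i => ?_⟩
  · simp [pairB, y, w, Finsupp.linearCombination_apply, Finsupp.sum, Pi.single_apply, eq_comm]
  · simp [pairB, y]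

lemma perpT_perpR_of_wsharpTail_le {n : ℕ} {L : Submodule ℂ TT} (h : wsharpTail n ≤ L) :
    perpT (perpR L) = L := by
  refine le_antisymm (fun x hx => by_contra fun hxL => ?_) (le_perpT_perpR L)
  obtain ⟨f, hfx, hf⟩ := exists_le_ker_of_notMem hxL
  obtain ⟨y, rfl⟩ := exists_pairB_flip_eq (h.trans hf)
  exact hfx (mem_perpT.1 hx y (mem_perpR.2 hf))

lemma perpT_perpR_sup_tailSpan (G : Submodule ℂ TT) (n : ℕ) :
    perpT (perpR (G ⊔ tailSpan n)) = G ⊔ wsharpTail n := by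
  rw [perpR_sup, perpR_tailSpan, ← perpR_sup, perpT_perpR_of_wsharpTail_le le_sup_right]

lemma disjoint_wsharpTail_of_disjoint_tailSpan {G : Submodule ℂ TT} {n : ℕ} (hG : G ≤ Vsub)
    (h : Disjoint G (tailSpan n)) : Disjoint G (wsharpTail n) := by
  rw [disjoint_iff, ← wsharpTail_inf_vsub, inf_comm (wsharpTail n), ← inf_assoc,
    inf_eq_left.2 hG] at h
  exact disjoint_iff.2 h

lemma commensurable_sup_wsharpTail (G : Submodule ℂ TT) [FiniteDimensional ℂ G] (n : ℕ) :
    Commensurable (G ⊔ wsharpTail n) (wsharpTail n) :=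
  ⟨almostLE_sup_right, almostLE_of_le le_sup_right⟩

lemma relDim_sup_wsharpTail_wsharp {G : Submodule ℂ TT} [FiniteDimensional ℂ G] {n : ℕ}
    (h : Disjoint G (wsharpTail n)) :
    relDim (G ⊔ wsharpTail n) Wsharp = finrank ℂ G - n := by
  rw [← (commensurable_sup_wsharpTail G n).relDim_add_relDim (commensurable_wsharpTail_wsharp n),
    relDim_of_le le_sup_right, relCodim_sup_right_of_disjoint h, relDim_wsharpTail_wsharp,
    sub_eq_add_neg]

lemma Ecomm.exists_wsharpTail_le {W' : Submodule ℂ TT} {k : ℤ} (h : Ecomm W' k) :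
    ∃ n, wsharpTail n ≤ perpT (perpR W') ∧ Commensurable (perpT (perpR W')) Wsharp ∧
      relDim (perpT (perpR W')) Wsharp = k := by
  obtain ⟨n, G, hGV, hfin, hrank, hdisj, rfl⟩ := h
  rw [perpT_perpR_sup_tailSpan]
  refine ⟨n, le_sup_right,
    (commensurable_sup_wsharpTail G n).trans (commensurable_wsharpTail_wsharp n), ?_⟩
  rw [relDim_sup_wsharpTail_wsharp (disjoint_wsharpTail_of_disjoint_tailSpan hGV hdisj), hrank,
    add_sub_cancel_left]

lemma ecomm_inf_vsub {n : ℕ} {L : Submodule ℂ TT} (hn : wsharpTail n ≤ L)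
    (hL : Commensurable L Wsharp) : Ecomm (L ⊓ Vsub) (relDim L Wsharp) := by
  obtain ⟨G, hdisj, hsup⟩ := IsModularLattice.exists_disjoint_and_sup_eq
    (wsharpTail_inf_vsub n ▸ inf_le_inf_right Vsub hn : tailSpan n ≤ L ⊓ Vsub)
  have hGLV : G ≤ L ⊓ Vsub := hsup ▸ le_sup_right
  have hLG : L = G ⊔ wsharpTail n := by
    calc L = (wsharpTail n ⊔ Vsub) ⊓ L := by rw [wsharpTail_sup_vsub, top_inf_eq]
      _ = wsharpTail n ⊔ (tailSpan n ⊔ G) := by rw [sup_inf_assoc_of_le _ hn, inf_comm, hsup]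
      _ = G ⊔ wsharpTail n := by
        rw [← sup_assoc, sup_eq_left.2 (tailSpan_le_wsharpTail n), sup_comm]
  have hGn : Disjoint G (wsharpTail n) :=
    disjoint_wsharpTail_of_disjoint_tailSpan (hGLV.trans inf_le_right) hdisj.symm
  have hfin : FiniteDimensional ℂ G :=
    (almostLE_iff_finiteDimensional_of_disjoint hGn).1
      ((hL.almostLE.trans (almostLE_wsharp_wsharpTail n)).mono_left (hGLV.trans inf_le_left))
  refine ⟨n, G, hGLV.trans inf_le_right, hfin, ?_, hdisj.symm, by rw [← hsup, sup_comm]⟩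
  rw [hLG, relDim_sup_wsharpTail_wsharp hGn, add_sub_cancel]

lemma exists_comap_piW_le_perpR_wsharpTail {S : Submodule ℂ (ℕ →₀ ℂ)} (hS : S.FG) :
    ∃ N, S.comap piW ≤ perpR (wsharpTail N) := by
  obtain ⟨s, hs⟩ := exists_finset_le_supported_of_fg hS
  obtain ⟨N, hN⟩ := s.exists_nat_subset_range
  refine ⟨N, fun y hy => ?_⟩
  rw [← perpR_tailSpan, mem_perpR_tailSpan]
  exact fun i hi => (Finsupp.mem_supported' _ _).1 (hs hy) i
    fun his => (Finset.mem_range.1 (hN his)).not_ge hi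

namespace IsMackey

variable {φ : TT ≃ₗ[ℂ] TT} {ψ : RR ≃ₗ[ℂ] RR}

lemma symm (h : IsMackey φ ψ) : IsMackey φ.symm ψ.symm := fun x y => by
  rw [← ψ.apply_symm_apply y, ← h, φ.apply_symm_apply, ψ.symm_apply_apply]

lemma finiteDimensional_span_piW (h : IsMackey φ ψ) :
    FiniteDimensional ℂ (span ℂ (Set.range fun j => piW (ψ (0, Pi.single j 1)))) := by
  refine finiteDimensional_span_range_of_finite_ne_zero _ fun f => ?_
  have hf : f = Finsupp.linearCombination ℂ fun i => f (Finsupp.single i 1) := by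
    ext i
    simp
  have hcoord (j : ℕ) : f (piW (ψ (0, Pi.single j 1))) =
      (φ (fun i => f (Finsupp.single i 1), 0)).2 j := by
    rw [← pairB_single_snd, h, pairB_fst, ← hf]
    rfl
  simp only [hcoord]
  exact Finsupp.hasFiniteSupport _

lemma exists_wsharpTail_le_comap (h : IsMackey φ ψ) (n : ℕ) :
    ∃ N, wsharpTail N ≤ (wsharpTail n).comap φ.toLinearMap := by
  let b : Fin n → (ℕ →₀ ℂ) := fun i => piW (ψ (Finsupp.single i 1, 0))
  let c : ℕ → (ℕ →₀ ℂ) := fun j => piW (ψ (0, Pi.single j 1))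
  have hfg : (span ℂ (Set.range b) ⊔ span ℂ (Set.range c)).FG :=
    (fg_span (Set.finite_range b)).sup
      ((fg_iff_finiteDimensional _).2 h.finiteDimensional_span_piW)
  obtain ⟨N, hN⟩ := exists_comap_piW_le_perpR_wsharpTail hfg
  refine ⟨N, fun x hx => mem_wsharpTail.2 ⟨fun i hi => ?_, Finsupp.ext fun j => ?_⟩⟩
  · have hb : b ⟨i, hi⟩ ∈ span ℂ (Set.range b) := subset_span ⟨_, rfl⟩
    rw [← pairB_single_fst]
    exact (h x _).trans (mem_perpR.1 (hN (mem_sup_left hb)) hx)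
  · have hc : c j ∈ span ℂ (Set.range c) := subset_span ⟨j, rfl⟩
    rw [← pairB_single_snd]
    exact (h x _).trans (mem_perpR.1 (hN (mem_sup_right hc)) hx)

lemma almostLE_map_wsharp (h : IsMackey φ ψ) : AlmostLE (Wsharp.map φ.toLinearMap) Wsharp := by
  obtain ⟨N, hN⟩ := h.exists_wsharpTail_le_comap 0
  exact ((almostLE_wsharp_wsharpTail N).map φ).trans
    (almostLE_of_le ((map_le_iff_le_comap.2 hN).trans (wsharpTail_le_wsharp 0)))

lemma commensurable_map_wsharp (h : IsMackey φ ψ) :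
    Commensurable (Wsharp.map φ.toLinearMap) Wsharp := by
  refine ⟨h.almostLE_map_wsharp, ?_⟩
  simpa [← map_comp] using h.symm.almostLE_map_wsharp.map φ

end IsMackey

lemma deg_eq_relDim (φ : TT ≃ₗ[ℂ] TT) : deg φ = relDim (Wsharp.map φ.toLinearMap) Wsharp := by
  have hpiU (A : Submodule ℂ TT) : finrank ℂ (A.map piU) = relCodim A Wsharp :=
    finrank_map_eq_relCodim (by rw [ker_piU])
  rw [deg, relDim, hpiU, hpiU, ← relCodim_map (Wsharp.map φ.symm.toLinearMap) Wsharp φ]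
  simp [← map_comp]

/-- If `W'` is E-commensurable of index `k` with `W`, then `φ·W' = φ((W'^⊥)^⊥) ∩ V` is
E-commensurable of index `k + d(φ)` with `W`. -/
theorem stmt9 (φ : TT ≃ₗ[ℂ] TT) (ψ : RR ≃ₗ[ℂ] RR) (h : IsMackey φ ψ)
    (W' : Submodule ℂ TT) (k : ℤ) (hW' : Ecomm W' k) :
    Ecomm (actOn φ W') (k + deg φ) := by
  obtain ⟨n, hnL, hL, rfl⟩ := hW'.exists_wsharpTail_le
  obtain ⟨m, hm⟩ := h.symm.exists_wsharpTail_le_comap n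
  have hmL : wsharpTail m ≤ (perpT (perpR W')).map φ.toLinearMap := by
    rw [map_equiv_eq_comap_symm]
    exact hm.trans (comap_mono hnL)
  have hφL := hL.map φ
  have hφW := h.commensurable_map_wsharp
  rw [deg_eq_relDim, ← relDim_map _ _ φ, hφL.relDim_add_relDim hφW]
  exact ecomm_inf_vsub hmL (hφL.trans hφW)
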